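/- Let f be a spectral point of graphs and α ≤ β real numbers such that f_α is monotone under cohomomorphisms of noncommutative graphs of the form ⊕_{d=1}^r Ḡ_d ⊗ Q_d. If H is a finite simple graph, q ≥ 1 an integer, and H̄ ⊗ Q_q ≤ ⊕_{d=1}^r Ḡ_d ⊗ Q_d, then f(H)·q^β ≤ ∑_{d=1}^r f(G_d)·d^β. -/

import Mathlib

open scoped Kronecker
open Matrix

namespace NCG

/-- Existence of a cohomomorphism from `T` to `S` (written `T ≤ S`). -/
def Cohom {A B : Type} [Fintype A] [DecidableEq A] [Fintype B] [DecidableEq B]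
    (T : Submodule ℂ (Matrix B B ℂ)) (S : Submodule ℂ (Matrix A A ℂ)) : Prop :=
  ∃ (k : ℕ) (E : Fin k → Matrix A B ℂ),
    (∑ i, (E i)ᴴ * E i) = 1 ∧ ∀ i j : Fin k, ∀ M ∈ S, (E i)ᴴ * M * E j ∈ T

/-- The noncommutative graph `Ḡ` of a classical graph `G`. -/
noncomputable def graphNC {V : Type} [Fintype V] [DecidableEq V] (G : SimpleGraph V) :
    Submodule ℂ (Matrix V V ℂ) :=
  Submodule.span ℂ {M | ∃ x y : V, (G.Adj x y ∨ x = y) ∧ M = Matrix.single x y 1}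

/-- The confusability graph `Q_d = ℂ·I_d` of the noiseless `d`-dimensional quantum channel. -/
noncomputable def qGraph (d : ℕ) : Submodule ℂ (Matrix (Fin d) (Fin d) ℂ) :=
  Submodule.span ℂ {(1 : Matrix (Fin d) (Fin d) ℂ)}

/-- Tensor product of noncommutative graphs. -/
noncomputable def ncTensor {A B : Type} [Fintype A] [DecidableEq A] [Fintype B] [DecidableEq B]
    (S : Submodule ℂ (Matrix A A ℂ)) (T : Submodule ℂ (Matrix B B ℂ)) :
    Submodule ℂ (Matrix (A × B) (A × B) ℂ) :=
  Submodule.span ℂ {M | ∃ X ∈ S, ∃ Y ∈ T, M = X ⊗ₖ Y}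

/-- Direct sum of a finite family of noncommutative graphs. -/
noncomputable def ncDirectSum {ι : Type} [Fintype ι] [DecidableEq ι] {V : ι → Type}
    [∀ i, Fintype (V i)] [∀ i, DecidableEq (V i)]
    (S : ∀ i, Submodule ℂ (Matrix (V i) (V i) ℂ)) :
    Submodule ℂ (Matrix (Σ i, V i) (Σ i, V i) ℂ) where
  carrier := {M | (∀ p q : Σ i, V i, p.1 ≠ q.1 → M p q = 0) ∧
    ∀ i, (Matrix.of fun x y : V i => M ⟨i, x⟩ ⟨i, y⟩) ∈ S i}
  add_mem' := by
    rintro a b ⟨ha1, ha2⟩ ⟨hb1, hb2⟩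
    refine ⟨fun p q h => ?_, fun i => ?_⟩
    · simp [Matrix.add_apply, ha1 p q h, hb1 p q h]
    · have h := (S i).add_mem (ha2 i) (hb2 i)
      convert h using 1
      rfl
  zero_mem' := by
    refine ⟨fun p q h => rfl, fun i => ?_⟩
    have h0 : (Matrix.of fun x y : V i =>
        (0 : Matrix (Σ j, V j) (Σ j, V j) ℂ) ⟨i, x⟩ ⟨i, y⟩) = 0 := rfl
    rw [h0]
    exact (S i).zero_mem
  smul_mem' := by
    rintro c a ⟨ha1, ha2⟩
    refine ⟨fun p q h => ?_, fun i => ?_⟩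
    · simp [Matrix.smul_apply, ha1 p q h]
    · have h := (S i).smul_mem c (ha2 i)
      convert h using 1
      rfl

/-- `⊕_{d=1}^r Ḡ_d ⊗ Q_d`, where `G d` plays the role of `G_{d+1}` for `d : Fin r`. -/
noncomputable def bigSum {r : ℕ} {V : Fin r → Type} [∀ d, Fintype (V d)] [∀ d, DecidableEq (V d)]
    (G : ∀ d, SimpleGraph (V d)) :
    Submodule ℂ (Matrix (Σ d : Fin r, V d × Fin (d.1 + 1))
      (Σ d : Fin r, V d × Fin (d.1 + 1)) ℂ) :=
  ncDirectSum fun d : Fin r => ncTensor (graphNC (G d)) (qGraph (d.1 + 1))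


/-- Disjoint union of simple graphs. -/
def disjUnion {V W : Type} (G : SimpleGraph V) (H : SimpleGraph W) :
    SimpleGraph (V ⊕ W) where
  Adj a b := match a, b with
    | Sum.inl x, Sum.inl y => G.Adj x y
    | Sum.inr x, Sum.inr y => H.Adj x y
    | _, _ => False
  symm := by
    refine ⟨?_⟩
    rintro (x | x) (y | y) h
    · exact G.symm.symm _ _ h
    · exact h.elim
    · exact h.elim
    · exact H.symm.symm _ _ h
  loopless := by
    refine ⟨?_⟩
    rintro (x | x) h
    · exact G.loopless.irrefl x h
    · exact H.loopless.irrefl x h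

/-- Strong product of simple graphs. -/
def strongProd {V W : Type} (G : SimpleGraph V) (H : SimpleGraph W) :
    SimpleGraph (V × W) where
  Adj p q := p ≠ q ∧ (G.Adj p.1 q.1 ∨ p.1 = q.1) ∧ (H.Adj p.2 q.2 ∨ p.2 = q.2)
  symm := by
    refine ⟨?_⟩
    rintro p q ⟨hne, h1, h2⟩
    exact ⟨hne.symm, h1.imp (fun h => h.symm) (fun h => h.symm),
      h2.imp (fun h => h.symm) (fun h => h.symm)⟩
  loopless := ⟨fun p h => h.1 rfl⟩

/-- A spectral point of graphs: a normalized, additive, multiplicative,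
isomorphism-invariant graph parameter, monotone under cohomomorphisms
(homomorphisms between the complements). -/
structure GraphSpectralPoint where
  val : ∀ (V : Type) [Fintype V] [DecidableEq V], SimpleGraph V → ℝ
  nonneg : ∀ (V : Type) [Fintype V] [DecidableEq V] (G : SimpleGraph V), 0 ≤ val V G
  iso_inv : ∀ (V W : Type) [Fintype V] [DecidableEq V] [Fintype W] [DecidableEq W]
    (G : SimpleGraph V) (H : SimpleGraph W), Nonempty (G ≃g H) → val V G = val W H
  additive : ∀ (V W : Type) [Fintype V] [DecidableEq V] [Fintype W] [DecidableEq W]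
    (G : SimpleGraph V) (H : SimpleGraph W),
    val (V ⊕ W) (disjUnion G H) = val V G + val W H
  multiplicative : ∀ (V W : Type) [Fintype V] [DecidableEq V] [Fintype W] [DecidableEq W]
    (G : SimpleGraph V) (H : SimpleGraph W),
    val (V × W) (strongProd G H) = val V G * val W H
  normalized : val (Fin 1) ⊤ = 1
  monotone : ∀ (V W : Type) [Fintype V] [DecidableEq V] [Fintype W] [DecidableEq W]
    (G : SimpleGraph V) (H : SimpleGraph W), Nonempty (Hᶜ →g Gᶜ) → val W H ≤ val V G

/-- The extension `F_α` of a graph parameter `F` with exponent `α` is monotone under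
cohomomorphisms of noncommutative graphs of the form `⊕_{d=1}^r Ḡ_d ⊗ Q_d`
(the exponent `α` is admissible for `F`). -/
def MonotoneExt (F : ∀ (V : Type) [Fintype V] [DecidableEq V], SimpleGraph V → ℝ)
    (α : ℝ) : Prop :=
  ∀ (r s : ℕ) (V : Fin r → Type) (W : Fin s → Type)
    [∀ d, Fintype (V d)] [∀ d, DecidableEq (V d)]
    [∀ d, Fintype (W d)] [∀ d, DecidableEq (W d)]
    (G : ∀ d, SimpleGraph (V d)) (H : ∀ d, SimpleGraph (W d)),
    Cohom (bigSum H) (bigSum G) →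
    ∑ d : Fin s, F (W d) (H d) * ((d.1 + 1 : ℕ) : ℝ) ^ α ≤
      ∑ d : Fin r, F (V d) (G d) * ((d.1 + 1 : ℕ) : ℝ) ^ α

/-- Entrywise description of `Ḡ`. -/
lemma mem_graphNC_iff {V : Type} [Fintype V] [DecidableEq V] (G : SimpleGraph V)
    (M : Matrix V V ℂ) :
    M ∈ graphNC G ↔ ∀ x y, M x y ≠ 0 → G.Adj x y ∨ x = y := by
  constructor
  · intro hM
    induction hM using Submodule.span_induction with
    | mem M hM =>
      obtain ⟨x, y, hxy, rfl⟩ := hM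
      intro u v huv
      rw [Matrix.single_apply] at huv
      split_ifs at huv with h
      · rwa [← h.1, ← h.2]
      · exact absurd rfl huv
    | zero => exact fun x y h => absurd rfl h
    | add A B _ _ hA hB =>
      intro x y h
      by_cases hAxy : A x y = 0
      · exact hB x y fun hB0 => h (by rw [Matrix.add_apply, hAxy, hB0, add_zero])
      · exact hA x y hAxy
    | smul c A _ hA =>
      exact fun x y h => hA x y fun hA0 => h (by rw [Matrix.smul_apply, hA0, smul_zero])
  · intro hM
    rw [Matrix.matrix_eq_sum_single M]
    refine Submodule.sum_mem _ fun x _ => Submodule.sum_mem _ fun y _ => ?_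
    by_cases h : M x y = 0
    · rw [h, Matrix.single_zero]
      exact Submodule.zero_mem _
    · rw [← mul_one (M x y), ← smul_eq_mul, ← Matrix.smul_single]
      exact Submodule.smul_mem _ _ (Submodule.subset_span ⟨x, y, hM x y h, rfl⟩)

/-- The elements of `S ⊗ Q_n` are the matrices `C ⊗ I_n` with `C ∈ S`. -/
lemma mem_ncTensor_qGraph_iff {V : Type} [Fintype V] [DecidableEq V]
    (S : Submodule ℂ (Matrix V V ℂ)) (n : ℕ) (M : Matrix (V × Fin n) (V × Fin n) ℂ) :
    M ∈ ncTensor S (qGraph n) ↔ ∃ C ∈ S, M = C ⊗ₖ (1 : Matrix (Fin n) (Fin n) ℂ) := by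
  constructor
  · intro hM
    induction hM using Submodule.span_induction with
    | mem M hM =>
      obtain ⟨X, hX, Y, hY, rfl⟩ := hM
      obtain ⟨c, rfl⟩ := Submodule.mem_span_singleton.1 hY
      exact ⟨c • X, S.smul_mem c hX, by rw [Matrix.kronecker_smul, Matrix.smul_kronecker]⟩
    | zero => exact ⟨0, S.zero_mem, by rw [Matrix.zero_kronecker]⟩
    | add A B _ _ hA hB =>
      obtain ⟨C, hC, rfl⟩ := hA
      obtain ⟨D, hD, rfl⟩ := hB
      exact ⟨C + D, S.add_mem hC hD, by rw [Matrix.add_kronecker]⟩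
    | smul c A _ hA =>
      obtain ⟨C, hC, rfl⟩ := hA
      exact ⟨c • C, S.smul_mem c hC, by rw [Matrix.smul_kronecker]⟩
  · rintro ⟨C, hC, rfl⟩
    exact Submodule.subset_span ⟨C, hC, 1, Submodule.mem_span_singleton_self _, rfl⟩

/-- Entrywise description of `Ḡ ⊗ Q_n`. -/
lemma mem_graph_tensor_iff {V : Type} [Fintype V] [DecidableEq V] (G : SimpleGraph V)
    (n : ℕ) (M : Matrix (V × Fin n) (V × Fin n) ℂ) :
    M ∈ ncTensor (graphNC G) (qGraph n) ↔
      ∃ c : V → V → ℂ, (∀ x y, c x y ≠ 0 → G.Adj x y ∨ x = y) ∧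
        ∀ x a y b, M (x, a) (y, b) = if a = b then c x y else 0 := by
  rw [mem_ncTensor_qGraph_iff]
  constructor
  · rintro ⟨C, hC, rfl⟩
    refine ⟨C, (mem_graphNC_iff G C).1 hC, fun x a y b => ?_⟩
    simp [Matrix.kroneckerMap_apply, Matrix.one_apply]
  · rintro ⟨c, hc, hM⟩
    refine ⟨Matrix.of c, (mem_graphNC_iff G _).2 hc, ?_⟩
    ext ⟨x, a⟩ ⟨y, b⟩
    simp [hM, Matrix.kroneckerMap_apply, Matrix.one_apply]

/-- Entrywise description of `⊕_d Ḡ_d ⊗ Q_d`. -/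
lemma mem_bigSum_iff {r : ℕ} {V : Fin r → Type} [∀ d, Fintype (V d)]
    [∀ d, DecidableEq (V d)] (G : ∀ d, SimpleGraph (V d))
    (M : Matrix (Σ d : Fin r, V d × Fin (d.1 + 1)) (Σ d : Fin r, V d × Fin (d.1 + 1)) ℂ) :
    M ∈ bigSum G ↔ (∀ p q, p.1 ≠ q.1 → M p q = 0) ∧
      ∀ d, ∃ c : V d → V d → ℂ, (∀ x y, c x y ≠ 0 → (G d).Adj x y ∨ x = y) ∧
        ∀ x a y b, M ⟨d, x, a⟩ ⟨d, y, b⟩ = if a = b then c x y else 0 := by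
  change (_ ∧ ∀ d, _ ∈ ncTensor (graphNC (G d)) (qGraph (d.1 + 1))) ↔ _
  simp only [mem_graph_tensor_iff, Matrix.of_apply]

open scoped ComplexOrder in
/-- A `d × q` matrix with `d < q` whose columns are orthogonal and of equal norm vanishes. -/
lemma eq_zero_of_conjTranspose_mul_self_eq_smul_one {d q : ℕ} (hdq : d < q)
    (F : Matrix (Fin d) (Fin q) ℂ) (c : ℂ) (hF : Fᴴ * F = c • 1) : F = 0 := by
  by_cases hc : c = 0
  · rwa [hc, zero_smul, Matrix.conjTranspose_mul_self_eq_zero] at hF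
  · exfalso
    have h1 : (Fᴴ * F).rank ≤ d := by
      rw [Matrix.rank_conjTranspose_mul_self]
      simpa using F.rank_le_card_height
    have h2 : (Fᴴ * F).rank = q := by
      rw [hF, Matrix.rank_of_isUnit]
      · simp
      · rw [Matrix.isUnit_iff_isUnit_det, Matrix.det_smul, Matrix.det_one, mul_one]
        exact (IsUnit.mk0 c hc).pow _
    omega

/-- The Kraus operators of a cohomomorphism from `H̄ ⊗ Q_q` have no component in the summands
`Ḡ_d ⊗ Q_d` with `d < q`. -/
lemma kraus_apply_eq_zero {r : ℕ} {V : Fin r → Type} [∀ d, Fintype (V d)]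
    [∀ d, DecidableEq (V d)] (G : ∀ d, SimpleGraph (V d))
    {U : Type} [Fintype U] [DecidableEq U] (H : SimpleGraph U) (q : ℕ)
    (E : Matrix (Σ d : Fin r, V d × Fin (d.1 + 1)) (U × Fin q) ℂ)
    (hE : ∀ M ∈ bigSum G, Eᴴ * M * E ∈ ncTensor (graphNC H) (qGraph q))
    (p : Σ d : Fin r, V d × Fin (d.1 + 1)) (hp : p.1.1 + 1 < q) (t : U × Fin q) :
    E p t = 0 := by
  obtain ⟨d, x, a⟩ := p
  obtain ⟨y, b⟩ := t
  let D : (Σ d : Fin r, V d × Fin (d.1 + 1)) → ℂ :=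
    fun p => if (⟨p.1, p.2.1⟩ : Σ d, V d) = ⟨d, x⟩ then 1 else 0
  have hmem : Matrix.diagonal D ∈ bigSum G := by
    rw [mem_bigSum_iff]
    refine ⟨fun p q hpq => Matrix.diagonal_apply_ne _ fun h => hpq (by rw [h]), fun e => ?_⟩
    refine ⟨fun u v => if u = v then if (⟨e, u⟩ : Σ d, V d) = ⟨d, x⟩ then 1 else 0 else 0, ?_, ?_⟩
    · intro u v huv
      by_contra hne
      exact huv (if_neg fun h => hne (Or.inr h))
    · intro u a v b
      by_cases hab : a = b
      · by_cases huv : u = v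
        · subst hab huv
          simp [D]
        · simp [huv]
      · simp [hab]
  obtain ⟨c, -, hc⟩ := (mem_graph_tensor_iff H q _).1 (hE _ hmem)
  let F : Matrix (Fin (d.1 + 1)) (Fin q) ℂ := Matrix.of fun a b => E ⟨d, x, a⟩ (y, b)
  have hF : Fᴴ * F = c y y • 1 := by
    ext b b'
    have h := hc y b y b'
    rw [Matrix.mul_assoc, Matrix.mul_apply] at h
    simp only [Matrix.diagonal_mul, D, Fintype.sum_sigma, Fintype.sum_prod_type] at h
    rw [Finset.sum_eq_single d, Finset.sum_eq_single x] at h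
    · simpa [Matrix.mul_apply, F, Matrix.one_apply] using h
    · intro u _ hu
      simp [hu]
    · simp
    · intro e _ he
      simp [he]
    · simp
  have := congrFun (congrFun (eq_zero_of_conjTranspose_mul_self_eq_smul_one hp F _ hF) a) b
  exact this

/-- The family of graphs `G` with the members at indices not satisfying `P` replaced by the
graph without vertices. -/
def restrictFamily {r : ℕ} (P : Fin r → Prop) {V : Fin r → Type} (G : ∀ d, SimpleGraph (V d))
    (d : Fin r) : SimpleGraph {_x : V d // P d} :=
  (G d).comap Subtype.val

lemma GraphSpectralPoint.val_eq_zero_of_isEmpty (f : GraphSpectralPoint) {V : Type} [Fintype V]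
    [DecidableEq V] [IsEmpty V] (G : SimpleGraph V) : f.val V G = 0 := by
  have h := f.additive V V G G
  have h' := f.iso_inv (V ⊕ V) V (disjUnion G G) G
    ⟨⟨Equiv.equivOfIsEmpty _ _, fun {a} => isEmptyElim a⟩⟩
  linarith

lemma GraphSpectralPoint.val_restrictFamily_of_pos (f : GraphSpectralPoint) {r : ℕ}
    (P : Fin r → Prop) [DecidablePred P] {V : Fin r → Type} [∀ d, Fintype (V d)]
    [∀ d, DecidableEq (V d)] (G : ∀ d, SimpleGraph (V d)) (d : Fin r) (hd : P d) :
    f.val {_x : V d // P d} (restrictFamily P G d) = f.val (V d) (G d) :=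
  f.iso_inv _ _ _ _ ⟨⟨Equiv.subtypeUnivEquiv fun _ => hd, Iff.rfl⟩⟩

lemma GraphSpectralPoint.val_restrictFamily_of_neg (f : GraphSpectralPoint) {r : ℕ}
    (P : Fin r → Prop) [DecidablePred P] {V : Fin r → Type} [∀ d, Fintype (V d)]
    [∀ d, DecidableEq (V d)] (G : ∀ d, SimpleGraph (V d)) (d : Fin r) (hd : ¬ P d) :
    f.val {_x : V d // P d} (restrictFamily P G d) = 0 :=
  have : IsEmpty {_x : V d // P d} := ⟨fun x => hd x.2⟩
  f.val_eq_zero_of_isEmpty _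

/-- A cohomomorphism from `H̄ ⊗ Q_q` only needs the summands `Ḡ_d ⊗ Q_d` with `q ≤ d`. -/
lemma cohom_restrictFamily {r : ℕ} {V : Fin r → Type} [∀ d, Fintype (V d)]
    [∀ d, DecidableEq (V d)] (G : ∀ d, SimpleGraph (V d))
    {U : Type} [Fintype U] [DecidableEq U] (H : SimpleGraph U) (q : ℕ)
    (h : Cohom (ncTensor (graphNC H) (qGraph q)) (bigSum G)) :
    Cohom (bigSum (restrictFamily (fun d : Fin q => d.1 + 1 = q) fun _ => H))
      (bigSum (restrictFamily (fun d : Fin r => q ≤ d.1 + 1) G)) := by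
  obtain ⟨k, E, hE1, hE⟩ := h
  let φ : (Σ d : Fin r, {_x : V d // q ≤ d.1 + 1} × Fin (d.1 + 1)) →
      Σ d : Fin r, V d × Fin (d.1 + 1) := fun p => ⟨p.1, p.2.1.1, p.2.2⟩
  let ψ : (Σ d : Fin q, {_x : U // d.1 + 1 = q} × Fin (d.1 + 1)) → U × Fin q :=
    fun p => (p.2.1.1, Fin.cast p.2.1.2 p.2.2)
  have hφ : Function.Injective φ := by
    rintro ⟨d, ⟨x, hx⟩, a⟩ ⟨e, ⟨y, hy⟩, b⟩ hab
    simp only [φ, Sigma.mk.injEq] at hab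
    obtain ⟨rfl, hab⟩ := hab
    simp_all
  have hψ : Function.Injective ψ := by
    rintro ⟨d, ⟨x, hx⟩, a⟩ ⟨e, ⟨y, hy⟩, b⟩ hab
    obtain rfl : d = e := Fin.ext (by omega)
    simp_all [ψ]
  have hvanish : ∀ i p, p ∉ Set.range φ → ∀ t, E i p t = 0 := by
    intro i p hp t
    refine kraus_apply_eq_zero G H q (E i) (hE i i) p ?_ t
    by_contra hlt
    exact hp ⟨⟨p.1, ⟨p.2.1, not_lt.1 hlt⟩, p.2.2⟩, rfl⟩
  refine ⟨k, fun i => (E i).submatrix φ ψ, ?_, fun i j M' hM' => ?_⟩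
  · rw [← Matrix.submatrix_one ψ hψ, ← hE1]
    ext s t
    simp only [Matrix.sum_apply, Matrix.submatrix_apply, Matrix.mul_apply,
      Matrix.conjTranspose_apply]
    refine Finset.sum_congr rfl fun i _ => ?_
    exact Fintype.sum_of_injective φ hφ _ _
      (fun p hp => by rw [hvanish i p hp (ψ t), mul_zero]) fun _ => rfl
  · obtain ⟨hM'0, hM'1⟩ := (mem_bigSum_iff _ _).1 hM'
    let M : Matrix (Σ d : Fin r, V d × Fin (d.1 + 1)) (Σ d : Fin r, V d × Fin (d.1 + 1)) ℂ :=
      Matrix.of fun p p' => if hpp : q ≤ p.1.1 + 1 ∧ q ≤ p'.1.1 + 1 then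
        M' ⟨p.1, ⟨p.2.1, hpp.1⟩, p.2.2⟩ ⟨p'.1, ⟨p'.2.1, hpp.2⟩, p'.2.2⟩ else 0
    have hMφ : ∀ p p', M (φ p) (φ p') = M' p p' := fun p p' => dif_pos ⟨p.2.1.2, p'.2.1.2⟩
    have hM : M ∈ bigSum G := by
      rw [mem_bigSum_iff]
      refine ⟨fun p p' hpp => ?_, fun d => ?_⟩
      · simp only [M, Matrix.of_apply]
        split_ifs
        · exact hM'0 _ _ hpp
        · rfl
      · by_cases hd : q ≤ d.1 + 1
        · obtain ⟨c, hc, hMc⟩ := hM'1 d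
          refine ⟨fun x y => c ⟨x, hd⟩ ⟨y, hd⟩, fun x y hxy => ?_, fun x a y b => ?_⟩
          · exact (hc _ _ hxy).imp id fun h => congrArg Subtype.val h
          · rw [← hMc]
            exact hMφ ⟨d, ⟨x, hd⟩, a⟩ ⟨d, ⟨y, hd⟩, b⟩
        · refine ⟨fun _ _ => 0, fun _ _ h => absurd rfl h, fun x a y b => ?_⟩
          simp [M, hd]
    have hsub : ((E i).submatrix φ ψ)ᴴ * M' * (E j).submatrix φ ψ =
        ((E i)ᴴ * M * E j).submatrix ψ ψ := by
      ext s t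
      simp only [Matrix.submatrix_apply, Matrix.mul_apply, Matrix.conjTranspose_apply]
      refine Fintype.sum_of_injective φ hφ _ _
        (fun p hp => by rw [hvanish j p hp, mul_zero]) fun p => ?_
      congr 1
      exact Fintype.sum_of_injective φ hφ _ _
        (fun p hp => by rw [hvanish i p hp, star_zero, zero_mul]) fun p' => by rw [hMφ]
    obtain ⟨c, hc, hEc⟩ := (mem_graph_tensor_iff H q _).1 (hE i j M hM)
    rw [hsub, mem_bigSum_iff]
    refine ⟨fun p p' hpp => ?_, fun d => ⟨fun x y => c x.1 y.1, fun x y hxy => ?_, ?_⟩⟩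
    · have h1 := p.2.1.2
      have h2 := p'.2.1.2
      exact absurd (Fin.ext (by omega)) hpp
    · exact (hc _ _ hxy).imp id Subtype.ext
    · intro x a y b
      simp [ψ, hEc]

theorem single_term_monotone_for_larger_exponent (f : GraphSpectralPoint) {α β : ℝ}
    (hαβ : α ≤ β) (hadm : MonotoneExt f.val α)
    {r : ℕ} {V : Fin r → Type} [∀ d, Fintype (V d)] [∀ d, DecidableEq (V d)]
    (G : ∀ d, SimpleGraph (V d))
    {VH : Type} [Fintype VH] [DecidableEq VH] (H : SimpleGraph VH)
    (q : ℕ) (hq : 1 ≤ q)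
    (h : Cohom (ncTensor (graphNC H) (qGraph q)) (bigSum G)) :
    f.val VH H * (q : ℝ) ^ β ≤ ∑ d : Fin r, f.val (V d) (G d) * ((d.1 + 1 : ℕ) : ℝ) ^ β := by
  have hq0 : (0 : ℝ) < q := by exact_mod_cast hq
  have hsum := hadm _ _ _ _ _ _ (cohom_restrictFamily G H q h)
  have hlast : f.val VH H * (q : ℝ) ^ α ≤ ∑ d : Fin q,
      f.val {_x : VH // d.1 + 1 = q}
        (restrictFamily (fun d : Fin q => d.1 + 1 = q) (fun _ => H) d) *
        ((d.1 + 1 : ℕ) : ℝ) ^ α := by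
    have hd : q - 1 + 1 = q := by omega
    refine le_of_eq_of_le ?_ (Finset.single_le_sum
      (fun d _ => mul_nonneg (f.nonneg _ _) (by positivity))
      (Finset.mem_univ (⟨q - 1, by omega⟩ : Fin q)))
    rw [f.val_restrictFamily_of_pos (fun d : Fin q => d.1 + 1 = q) (fun _ => H) _ hd, hd]
  have hsplit : ∀ x : ℝ, 0 < x → x ^ β = x ^ α * x ^ (β - α) := fun x hx => by
    rw [← Real.rpow_add hx, add_sub_cancel]
  calc f.val VH H * (q : ℝ) ^ β
      = f.val VH H * (q : ℝ) ^ α * (q : ℝ) ^ (β - α) := by rw [hsplit _ hq0, mul_assoc]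
    _ ≤ _ := mul_le_mul_of_nonneg_right (hlast.trans hsum) (by positivity)
    _ ≤ _ := by
      rw [Finset.sum_mul]
      refine Finset.sum_le_sum fun d _ => ?_
      by_cases hd : q ≤ d.1 + 1
      · rw [f.val_restrictFamily_of_pos (fun d : Fin r => q ≤ d.1 + 1) G d hd,
          hsplit ((d.1 + 1 : ℕ) : ℝ) (by positivity), mul_assoc]
        refine mul_le_mul_of_nonneg_left (mul_le_mul_of_nonneg_left ?_ (by positivity))
          (f.nonneg _ _)
        exact Real.rpow_le_rpow hq0.le (by exact_mod_cast hd) (sub_nonneg.2 hαβ)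
      · rw [f.val_restrictFamily_of_neg (fun d : Fin r => q ≤ d.1 + 1) G d hd, zero_mul,
          zero_mul]
        exact mul_nonneg (f.nonneg _ _) (by positivity)

end NCG
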